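/- Let ABC be an acute triangle with side lengths a < b < c, and let T' be a minimum area isosceles container for ABC. Then T' is an obtuse triangle if and only if T' equals (as a convex set) one of the special containers of the second kind AB₁C, ABC₁, ABC₂. -/

import Mathlib

open EuclideanGeometry MeasureTheory Real

noncomputable section

/-- The Euclidean plane. -/
abbrev Pt : Type := EuclideanSpace ℝ (Fin 2)

/-- The closed triangular region with vertices `A`, `B`, `C`
(the convex hull of the three vertices). -/
def tri (A B C : Pt) : Set Pt := convexHull ℝ {A, B, C}

/-- The area of the triangle `A B C`:
the 2-dimensional Lebesgue measure of its convex hull. -/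
def triArea (A B C : Pt) : ℝ := (volume (tri A B C)).toReal

/-- A triangle is isosceles if at least two of its side lengths coincide. -/
def IsIsosceles (A B C : Pt) : Prop :=
  dist B C = dist C A ∨ dist C A = dist A B ∨ dist A B = dist B C

/-- `S P R` is an isosceles container for the triangle `A B C`:
it is a genuine isosceles triangle whose convex hull contains that of `A B C`. -/
def IsIsoscelesContainer (A B C S P R : Pt) : Prop :=
  AffineIndependent ℝ ![S, P, R] ∧ IsIsosceles S P R ∧ tri A B C ⊆ tri S P R

/-- `S P R` is a minimum area isosceles container for the triangle `A B C`. -/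
def IsMinIsoscelesContainer (A B C S P R : Pt) : Prop :=
  IsIsoscelesContainer A B C S P R ∧
    ∀ S' P' R' : Pt, IsIsoscelesContainer A B C S' P' R' →
      triArea S P R ≤ triArea S' P' R'

/-- `Z` lies on the ray starting at `X` passing through `Y`. -/
def OnRay (X Y Z : Pt) : Prop := SameRay ℝ (Y - X) (Z - X)

/-- Signed double area of a coordinate triangle. -/
def crossArea (s p r : ℝ × ℝ) : ℝ :=
  (p.1 - s.1) * (r.2 - s.2) - (p.2 - s.2) * (r.1 - s.1)

/-- Squared distance between two coordinate points. -/
def sqDist (u v : ℝ × ℝ) : ℝ := (u.1 - v.1) ^ 2 + (u.2 - v.2) ^ 2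

/-- The dot product of `u - w` and `v - w`. -/
def dotAt (w u v : ℝ × ℝ) : ℝ := (u.1 - w.1) * (v.1 - w.1) + (u.2 - w.2) * (v.2 - w.2)

/-- `x` is a convex combination of `s`, `p`, `r`. -/
def Covers (s p r x : ℝ × ℝ) : Prop :=
  ∃ a b c : ℝ, 0 ≤ a ∧ 0 ≤ b ∧ 0 ≤ c ∧ a + b + c = 1 ∧
    x.1 = a * s.1 + b * p.1 + c * r.1 ∧ x.2 = a * s.2 + b * p.2 + c * r.2

/-- Every isosceles triangle covering `X` has double area at least `m`. -/
def MinDoubleArea (m : ℝ) (X : Fin 3 → ℝ × ℝ) : Prop :=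
  ∀ s p r, crossArea s p r ≠ 0 → sqDist p s = sqDist p r →
    (∀ i, Covers s p r (X i)) → m ≤ |crossArea s p r|

/-- The acute triangle `X` lies in the obtuse isosceles triangle with base vertices `(∓L, 0)` and
apex `(0, h)`, and no isosceles triangle of smaller area contains `X`. -/
structure ObtuseMinConfig (L h : ℝ) (X : Fin 3 → ℝ × ℝ) : Prop where
  pos : 0 < h
  lt : h < L
  base : ∀ i, 0 ≤ (X i).2
  right : ∀ i, L * (X i).2 ≤ h * (L - (X i).1)
  left : ∀ i, L * (X i).2 ≤ h * (L + (X i).1)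
  acute : ∀ i j k, i ≠ j → i ≠ k → j ≠ k → 0 < dotAt (X k) (X i) (X j)
  min : MinDoubleArea (2 * L * h) X

lemma covers_vertex₁ (s p r : ℝ × ℝ) : Covers s p r s :=
  ⟨1, 0, 0, by norm_num, le_rfl, le_rfl, by norm_num, by ring, by ring⟩

lemma covers_vertex₂ (s p r : ℝ × ℝ) : Covers s p r p :=
  ⟨0, 1, 0, le_rfl, by norm_num, le_rfl, by norm_num, by ring, by ring⟩

lemma fin3_exhaust : ∀ i j k m : Fin 3, i ≠ j → i ≠ k → j ≠ k → m = i ∨ m = j ∨ m = k := by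
  decide

lemma fin3_third : ∀ i j : Fin 3, i ≠ j → ∃ k : Fin 3, i ≠ k ∧ j ≠ k := by
  decide

namespace MinDoubleArea

variable {m : ℝ} {X : Fin 3 → ℝ × ℝ}

lemma triple (H : MinDoubleArea m X) {i j k : Fin 3} (hij : i ≠ j) (hik : i ≠ k)
    (hjk : j ≠ k) {s p r : ℝ × ℝ} (h0 : crossArea s p r ≠ 0) (hi : sqDist p s = sqDist p r)
    (ci : Covers s p r (X i)) (cj : Covers s p r (X j)) (ck : Covers s p r (X k)) :
    m ≤ |crossArea s p r| := by
  refine H s p r h0 hi fun n => ?_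
  rcases fin3_exhaust i j k n hij hik hjk with rfl | rfl | rfl <;> assumption

/-- Rescaling the shorter of two sides with common endpoint `X j` to the length of the longer one
gives an isosceles triangle covering `X`. -/
lemma extend (H : MinDoubleArea m X) {i j k : Fin 3} (hij : i ≠ j)
    (hik : i ≠ k) (hjk : j ≠ k) {d r : ℝ} (hr : 0 < r) (hrd : r ≤ d)
    (hne : crossArea (X i) (X j) (X k) ≠ 0)
    (hd2 : sqDist (X i) (X j) = d ^ 2) (hr2 : sqDist (X k) (X j) = r ^ 2) :
    m * r ≤ d * |crossArea (X i) (X j) (X k)| := by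
  have hd0 : 0 < d := hr.trans_le hrd
  set c := d / r with hc
  have hc0 : 0 < c := by positivity
  have hc1 : 1 ≤ c := by rw [hc, one_le_div hr]; exact hrd
  set w : ℝ × ℝ := ((X j).1 + c * ((X k).1 - (X j).1), (X j).2 + c * ((X k).2 - (X j).2)) with hw
  have hcr : crossArea (X i) (X j) w = c * crossArea (X i) (X j) (X k) := by
    simp only [crossArea, hw]; ring
  have key := H.triple hij hik hjk (s := X i) (p := X j) (r := w)
    (by rw [hcr]; exact mul_ne_zero hc0.ne' hne)
    (by
      have e1 : sqDist (X j) w = c ^ 2 * sqDist (X k) (X j) := by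
        simp only [sqDist, hw]; ring
      have e2 : sqDist (X j) (X i) = sqDist (X i) (X j) := by simp only [sqDist]; ring
      rw [e1, e2, hd2, hr2, hc]
      field_simp)
    (covers_vertex₁ _ _ _) (covers_vertex₂ _ _ _)
    (by
      refine ⟨0, 1 - 1 / c, 1 / c, le_rfl, ?_, by positivity, by ring, ?_, ?_⟩
      · rw [sub_nonneg, div_le_one hc0]; exact hc1
      · simp only [hw]; field_simp; ring
      · simp only [hw]; field_simp; ring)
  rw [hcr, abs_mul, abs_of_pos hc0, hc] at key
  calc _ ≤ d / r * |crossArea (X i) (X j) (X k)| * r := by gcongr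
    _ = _ := by field_simp

end MinDoubleArea

namespace ObtuseMinConfig

variable {L h : ℝ} {X : Fin 3 → ℝ × ℝ}

lemma reflect (H : ObtuseMinConfig L h X) :
    ObtuseMinConfig L h (fun i => (-(X i).1, (X i).2)) where
  pos := H.pos
  lt := H.lt
  base := H.base
  right i := by have := H.left i; simpa using this
  left i := by have := H.right i; simpa [sub_eq_add_neg] using this
  acute i j k hij hik hjk := by
    have := H.acute i j k hij hik hjk
    simp only [dotAt] at this ⊢
    linarith
  min s p r h0 hi hc := by
    have := H.min (-s.1, s.2) (-p.1, p.2) (-r.1, r.2)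
      (fun h => h0 (by simp only [crossArea] at h ⊢; linarith))
      (by simp only [sqDist] at hi ⊢; linarith)
      (fun i => by
        obtain ⟨a, b, c, ha, hb, hcc, hs, h1, h2⟩ := hc i
        exact ⟨a, b, c, ha, hb, hcc, hs, by simp only at h1 ⊢; linarith, h2⟩)
    rw [← abs_neg]
    convert this using 2
    simp only [crossArea]
    ring

lemma crossArea_ne (H : ObtuseMinConfig L h X) {i j k : Fin 3} (hij : i ≠ j) (hik : i ≠ k)
    (hjk : j ≠ k) : crossArea (X i) (X j) (X k) ≠ 0 := by
  intro h0
  have h1 := H.acute i j k hij hik hjk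
  have h2 := H.acute j k i hjk hij.symm hik.symm
  have h3 := H.acute i k j hik hij hjk.symm
  simp only [dotAt, crossArea] at *
  have h4 := mul_pos h2 h3
  have h5 := mul_pos h1 h2
  have h6 := mul_pos h1 h3
  have : ((X j).1 - (X i).1) * ((X k).2 - (X i).2) - ((X j).2 - (X i).2) * ((X k).1 - (X i).1) = 0 := h0
  have h7 : (((X j).1 - (X i).1) * ((X k).2 - (X i).2) -
    ((X j).2 - (X i).2) * ((X k).1 - (X i).1)) ^ 2 = 0 := by rw [this]; ring
  nlinarith

/-- Triangles similar to the ambient one, turned by the angle with tangent `t` and bounded by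
supporting lines of `X`, are not smaller than the ambient triangle. -/
lemma support_bound (H : ObtuseMinConfig L h X) (t α β γ : ℝ)
    (hα : ∀ i, α ≤ (-h + t * L) * (X i).1 + (-L - t * h) * (X i).2)
    (hβ : ∀ i, β ≤ -2 * L * t * (X i).1 + 2 * L * (X i).2)
    (hγ : ∀ i, γ ≤ (h + t * L) * (X i).1 + (-L + t * h) * (X i).2) :
    0 < -(α + β + γ) ∧ (2 * L * h) ^ 2 * (1 + t ^ 2) ≤ (-(α + β + γ)) ^ 2 := by
  have hh := H.pos
  have hL : 0 < L := hh.trans H.lt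
  have ht : 0 < 1 + t ^ 2 := by positivity
  have hsum : ∀ i, 0 ≤ -(α + β + γ) := fun i => by linarith [hα i, hβ i, hγ i]
  have hN : 0 < -(α + β + γ) := by
    refine lt_of_le_of_ne (hsum 0) fun h0 => ?_
    have e1 : ∀ i, (-h + t * L) * (X i).1 + (-L - t * h) * (X i).2 = α := fun i => by
      linarith [hα i, hβ i, hγ i]
    have e2 : ∀ i, -2 * L * t * (X i).1 + 2 * L * (X i).2 = β := fun i => by
      linarith [hα i, hβ i, hγ i]
    have hx : (X 0).1 = (X 1).1 := by
      have : (2 * L * h * (1 + t ^ 2)) * ((X 0).1 - (X 1).1) = 0 := by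
        linear_combination -(2 * L) * (e1 0 - e1 1) - (L + t * h) * (e2 0 - e2 1)
      rcases mul_eq_zero.1 this with h | h
      · exact absurd h (by positivity)
      · linarith
    have hy : (X 0).2 = (X 1).2 := by
      have : 2 * L * ((X 0).2 - (X 1).2) = 0 := by
        linear_combination e2 0 - e2 1 + 2 * L * t * hx
      rcases mul_eq_zero.1 this with h | h
      · exact absurd h (by positivity)
      · linarith
    refine H.crossArea_ne (i := 0) (j := 1) (k := 2) (by decide) (by decide) (by decide) ?_
    simp only [crossArea, hx, hy]
    ring
  refine ⟨hN, ?_⟩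
  set N := -(α + β + γ) with hNdef
  have hα' : α = -N - β - γ := by rw [hNdef]; ring
  set s : ℝ × ℝ := ((2 * L * γ + β * (L - t * h)) / (2 * L * h * (1 + t ^ 2)),
    (2 * L * t * γ + (h + t * L) * β) / (2 * L * h * (1 + t ^ 2))) with hs
  set p : ℝ × ℝ := ((α * (t * h - L) + γ * (L + t * h)) / (2 * L * h * (1 + t ^ 2)),
    ((-h + t * L) * γ - (h + t * L) * α) / (2 * L * h * (1 + t ^ 2))) with hp
  set r : ℝ × ℝ := (-(2 * L * α + (L + t * h) * β) / (2 * L * h * (1 + t ^ 2)),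
    ((h - t * L) * β - 2 * L * t * α) / (2 * L * h * (1 + t ^ 2))) with hr
  have hcr : crossArea s p r = -(N ^ 2 / (2 * L * h * (1 + t ^ 2))) := by
    simp only [crossArea, hs, hp, hr, hNdef]
    field_simp
    ring
  have hpos : 0 < N ^ 2 / (2 * L * h * (1 + t ^ 2)) := by positivity
  have key := H.min s p r (by rw [hcr]; linarith)
    (by
      simp only [sqDist, hs, hp, hr]
      field_simp
      ring)
    (fun i => by
      refine ⟨((-h + t * L) * (X i).1 + (-L - t * h) * (X i).2 - α) / N,
        (-2 * L * t * (X i).1 + 2 * L * (X i).2 - β) / N,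
        ((h + t * L) * (X i).1 + (-L + t * h) * (X i).2 - γ) / N,
        div_nonneg (by linarith [hα i]) hN.le, div_nonneg (by linarith [hβ i]) hN.le,
        div_nonneg (by linarith [hγ i]) hN.le, ?_, ?_, ?_⟩
      · rw [hα']; field_simp; ring
      · simp only [hs, hp, hr, hα']
        field_simp
        ring
      · simp only [hs, hp, hr, hα']
        field_simp
        ring)
  rw [hcr, abs_neg, abs_of_pos hpos, le_div_iff₀ (by positivity)] at key
  calc _ = 2 * L * h * (2 * L * h * (1 + t ^ 2)) := by ring
    _ ≤ _ := key

lemma touches (H : ObtuseMinConfig L h X) :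
    (∃ i, L * (X i).2 = h * (L - (X i).1)) ∧ (∃ i, (X i).2 = 0) ∧
      ∃ i, L * (X i).2 = h * (L + (X i).1) := by
  have hh := H.pos
  have hL : 0 < L := hh.trans H.lt
  obtain ⟨i, hi⟩ := Finite.exists_min fun i => -h * (X i).1 - L * (X i).2
  obtain ⟨j, hj⟩ := Finite.exists_min fun i => (X i).2
  obtain ⟨k, hk⟩ := Finite.exists_min fun i => h * (X i).1 - L * (X i).2
  obtain ⟨h1, h2⟩ := H.support_bound 0 (-h * (X i).1 - L * (X i).2) (2 * L * (X j).2)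
    (h * (X k).1 - L * (X k).2) (fun m => by linarith [hi m])
    (fun m => by nlinarith [hj m]) (fun m => by linarith [hk m])
  have h3 := H.right i
  have h4 := mul_nonneg hL.le (H.base j)
  have h5 := H.left k
  have h6 : 2 * L * h ≤ -((-h * (X i).1 - L * (X i).2) + (2 * L * (X j).2) +
    (h * (X k).1 - L * (X k).2)) := by
    refine le_of_sq_le_sq ?_ h1.le
    linarith
  refine ⟨⟨i, by linarith⟩, ⟨j, ?_⟩, k, by linarith⟩
  have : L * (X j).2 = 0 := by linarith
  exact (mul_eq_zero.1 this).resolve_left hL.ne'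

lemma exists_flush_side (H : ObtuseMinConfig L h X) :
    ∃ i j, i ≠ j ∧
      ((L * (X i).2 = h * (L - (X i).1) ∧ L * (X j).2 = h * (L - (X j).1)) ∨
        ((X i).2 = 0 ∧ (X j).2 = 0) ∨
        (L * (X i).2 = h * (L + (X i).1) ∧ L * (X j).2 = h * (L + (X j).1))) := by
  by_contra! hcon
  have hh := H.pos
  have hL : 0 < L := hh.trans H.lt
  obtain ⟨⟨i, hi⟩, ⟨j, hj⟩, k, hk⟩ := H.touches
  have ev1 : ∀ᶠ t in nhds (0 : ℝ), ∀ m, (-h + t * L) * (X i).1 + (-L - t * h) * (X i).2 ≤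
      (-h + t * L) * (X m).1 + (-L - t * h) * (X m).2 := by
    refine Filter.eventually_all.2 fun m => ?_
    by_cases hm : i = m
    · simp [hm]
    · have hlt := lt_of_le_of_ne (H.right m) ((hcon i m hm).1 hi)
      refine (ContinuousAt.eventually_lt (by fun_prop) (by fun_prop) ?_).mono fun t ht => ht.le
      linarith
  have ev2 : ∀ᶠ t in nhds (0 : ℝ), ∀ m, -2 * L * t * (X j).1 + 2 * L * (X j).2 ≤
      -2 * L * t * (X m).1 + 2 * L * (X m).2 := by
    refine Filter.eventually_all.2 fun m => ?_
    by_cases hm : j = m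
    · simp [hm]
    · have hlt := lt_of_le_of_ne (H.base m) ((hcon j m hm).2.1 hj).symm
      refine (ContinuousAt.eventually_lt (by fun_prop) (by fun_prop) ?_).mono fun t ht => ht.le
      rw [hj]
      have := mul_pos hL hlt
      linarith
  have ev3 : ∀ᶠ t in nhds (0 : ℝ), ∀ m, (h + t * L) * (X k).1 + (-L + t * h) * (X k).2 ≤
      (h + t * L) * (X m).1 + (-L + t * h) * (X m).2 := by
    refine Filter.eventually_all.2 fun m => ?_
    by_cases hm : k = m
    · simp [hm]
    · have hlt := lt_of_le_of_ne (H.left m) ((hcon k m hm).2.2 hk)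
      refine (ContinuousAt.eventually_lt (by fun_prop) (by fun_prop) ?_).mono fun t ht => ht.le
      linarith
  obtain ⟨ε, hε, hball⟩ := Metric.eventually_nhds_iff.1 ((ev1.and ev2).and ev3)
  set κ := -(L * (X i).1 - h * (X i).2 - 2 * L * (X j).1 + L * (X k).1 + h * (X k).2) with hκ
  have main : ∀ t, |t| < ε → t ≠ 0 → κ * t ≤ 0 → False := by
    intro t ht ht0 hκt
    obtain ⟨⟨e1, e2⟩, e3⟩ := hball (y := t) (by simpa using ht)
    obtain ⟨hN, hb⟩ := H.support_bound t _ _ _ e1 e2 e3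
    have hval : -(((-h + t * L) * (X i).1 + (-L - t * h) * (X i).2) +
        (-2 * L * t * (X j).1 + 2 * L * (X j).2) +
        ((h + t * L) * (X k).1 + (-L + t * h) * (X k).2)) = 2 * L * h + κ * t := by
      rw [hκ]
      linear_combination hi - 2 * L * hj + hk
    rw [hval] at hN hb
    have : (2 * L * h + κ * t) ^ 2 ≤ (2 * L * h) ^ 2 :=
      pow_le_pow_left₀ hN.le (by linarith) 2
    have h2 : 0 < (2 * L * h) ^ 2 * t ^ 2 := by positivity
    linarith
  rcases le_total κ 0 with h0 | h0
  · exact main (ε / 2) (by rw [abs_of_pos (by linarith)]; linarith) (by positivity)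
      (mul_nonpos_of_nonpos_of_nonneg h0 (by linarith))
  · exact main (-(ε / 2)) (by rw [abs_neg, abs_of_pos (by linarith)]; linarith)
      (neg_ne_zero.2 (by positivity)) (mul_nonpos_of_nonneg_of_nonpos h0 (by linarith))

/-- One vertex of `X` is the apex, one is a base vertex and the last one lies on the base. -/
def CornerPosition (L h : ℝ) (X : Fin 3 → ℝ × ℝ) : Prop :=
  ∃ i j k, i ≠ j ∧ i ≠ k ∧ j ≠ k ∧ ((X i = (-L, 0)) ∨ X i = (L, 0)) ∧ X j = (0, h) ∧
    (X k).2 = 0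

lemma CornerPosition.of_reflect
    (hX : CornerPosition L h fun i => (-(X i).1, (X i).2)) : CornerPosition L h X := by
  obtain ⟨i, j, k, hij, hik, hjk, hi, hj, hk⟩ := hX
  refine ⟨i, j, k, hij, hik, hjk, ?_, ?_, hk⟩
  · simp only [Prod.ext_iff] at hi ⊢
    rcases hi with hi | hi
    · exact Or.inr ⟨by linarith [hi.1], hi.2⟩
    · exact Or.inl ⟨by linarith [hi.1], hi.2⟩
  · simp only [Prod.ext_iff] at hj ⊢
    exact ⟨by linarith [hj.1], hj.2⟩

/-- A base vertex of the container is a vertex of `X`, a second vertex is on the base and the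
third one touches the opposite leg. -/
lemma corner_of_base_vertex (H : ObtuseMinConfig L h X) {i j k : Fin 3} (hij : i ≠ j)
    (hik : i ≠ k) (hjk : j ≠ k) (hi : X i = (-L, 0)) (hj : (X j).2 = 0) (hk0 : 0 < (X k).2)
    (hk : L * (X k).2 = h * (L - (X k).1)) : CornerPosition L h X := by
  have hh := H.pos
  have hL : 0 < L := hh.trans H.lt
  have hleft := H.left k
  have hx0 : 0 ≤ (X k).1 := by
    by_contra! hneg
    nlinarith
  rcases hx0.eq_or_lt with hx | hx
  · refine ⟨i, k, j, hik, hij, hjk.symm, Or.inl hi, Prod.ext hx.symm ?_, hj⟩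
    rw [← hx] at hk
    exact mul_left_cancel₀ hL.ne' (by linarith)
  · exfalso
    have hjr := H.right j
    have hjl := H.left j
    rw [hj, mul_zero] at hjr hjl
    have hj1 : (X j).1 ≤ L := by
      by_contra! hneg; nlinarith
    have hj2 : -L ≤ (X j).1 := by
      by_contra! hneg; nlinarith
    have hxL : (X k).1 < L := by
      by_contra! hneg; nlinarith
    have hcr : crossArea (-L, 0) (X k) (2 * (X k).1 + L, 0) = -(2 * (L + (X k).1) * (X k).2) := by
      simp only [crossArea]; ring
    have hp : 0 < 2 * (L + (X k).1) * (X k).2 := by positivity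
    have key := H.min.triple hij hik hjk (s := (-L, 0)) (p := X k) (r := (2 * (X k).1 + L, 0))
      (by rw [hcr]; linarith) (by simp only [sqDist]; ring)
      (by rw [hi]; exact covers_vertex₁ _ _ _)
      (by
        refine ⟨(2 * (X k).1 + L - (X j).1) / (2 * ((X k).1 + L)), 0,
          ((X j).1 + L) / (2 * ((X k).1 + L)), div_nonneg (by linarith) (by linarith), le_rfl,
          div_nonneg (by linarith) (by linarith), ?_, ?_, ?_⟩
        · field_simp; ring
        · simp only; field_simp; ring
        · simp [hj])
      (covers_vertex₂ _ _ _)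
    rw [hcr, abs_neg, abs_of_pos hp] at key
    have : L * (2 * L * h) ≤ 2 * (L + (X k).1) * (h * (L - (X k).1)) := by
      rw [← hk]; nlinarith
    nlinarith [mul_pos hh (mul_pos hx hx)]

lemma corner_of_base_flush (H : ObtuseMinConfig L h X) {i j : Fin 3} (hij : i ≠ j)
    (hi : (X i).2 = 0) (hj : (X j).2 = 0) : CornerPosition L h X := by
  wlog hle : (X i).1 ≤ (X j).1 generalizing i j
  · exact this hij.symm hj hi (le_of_not_ge hle)
  have hh := H.pos
  have hL : 0 < L := hh.trans H.lt
  obtain ⟨k, hik, hjk⟩ := fin3_third i j hij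
  have ai := H.acute j k i hjk hij.symm hik.symm
  have aj := H.acute i k j hik hij hjk.symm
  have ak := H.acute i j k hij hik hjk
  simp only [dotAt, hi, hj, sub_zero, zero_sub, zero_mul, add_zero, sub_self] at ai aj ak
  have hlt : (X i).1 < (X j).1 := by
    refine lt_of_le_of_ne hle fun h0 => ?_
    rw [h0] at ai; simp at ai
  have hxi : (X i).1 < (X k).1 := by
    by_contra! h0; nlinarith
  have hxj : (X k).1 < (X j).1 := by
    by_contra! h0; nlinarith
  have hk0 : 0 < (X k).2 := by
    refine lt_of_le_of_ne (H.base k) fun h0 => ?_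
    rw [← h0] at ak
    nlinarith
  have bound : ∀ m, (X m).2 = 0 → -L ≤ (X m).1 ∧ (X m).1 ≤ L := fun m hm => by
    have h1 := H.left m
    have h2 := H.right m
    rw [hm, mul_zero] at h1 h2
    constructor <;> by_contra! h0 <;> nlinarith
  obtain ⟨⟨m, hm⟩, -, n, hn⟩ := H.touches
  have hR : (X j).1 = L ∨ L * (X k).2 = h * (L - (X k).1) := by
    rcases fin3_exhaust i j k m hij hik hjk with rfl | rfl | rfl
    · rw [hi] at hm
      have := bound j hj
      nlinarith
    · left
      rw [hj, mul_zero] at hm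
      rcases mul_eq_zero.1 hm.symm with h | h <;> linarith
    · exact Or.inr hm
  have hLft : (X i).1 = -L ∨ L * (X k).2 = h * (L + (X k).1) := by
    rcases fin3_exhaust i j k n hij hik hjk with rfl | rfl | rfl
    · left
      rw [hi, mul_zero] at hn
      rcases mul_eq_zero.1 hn.symm with h | h <;> linarith
    · rw [hj] at hn
      have := bound i hi
      nlinarith
    · exact Or.inr hn
  by_cases ei : (X i).1 = -L
  · rcases hR with ej | hR
    · exfalso
      rw [ei, ej] at ak
      have h1 := H.left k
      have h2 := H.right k
      set q := (X k).2 / h with hq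
      have hy : (X k).2 = h * q := by rw [hq]; field_simp
      have hq0 : 0 < q := div_pos hk0 hh
      rw [hy] at ak h1 h2
      have h3 : L * q ≤ L + (X k).1 := by
        by_contra! h0; nlinarith
      have h4 : L * q ≤ L - (X k).1 := by
        by_contra! h0; nlinarith
      have hq1 : q ≤ 1 := by
        by_contra! h0; nlinarith
      have h5 : (X k).1 ^ 2 ≤ (L * (1 - q)) ^ 2 := by
        apply sq_le_sq' <;> linarith
      have h6 : h ^ 2 < L ^ 2 := pow_lt_pow_left₀ H.lt hh.le two_ne_zero
      have h7 : h ^ 2 * q ^ 2 ≤ L ^ 2 * q ^ 2 := by gcongr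
      have h8 : L ^ 2 * (q * (1 - q)) ≥ 0 :=
        mul_nonneg (by positivity) (mul_nonneg hq0.le (by linarith))
      nlinarith
    · exact H.corner_of_base_vertex hij hik hjk (Prod.ext ei hi) hj hk0 hR
  · replace hLft := hLft.resolve_left ei
    by_cases ej : (X j).1 = L
    · refine CornerPosition.of_reflect
        (H.reflect.corner_of_base_vertex hij.symm hjk hik ?_ hi hk0 ?_)
      · exact Prod.ext (by simp [ej]) hj
      · simp only [sub_neg_eq_add]; exact hLft
    · exfalso
      replace hR := hR.resolve_left ej
      have hxk : (X k).1 = 0 := by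
        have : h * (X k).1 = 0 := by linarith
        exact (mul_eq_zero.1 this).resolve_left hh.ne'
      have hyk : (X k).2 = h := by
        rw [hxk] at hR
        exact mul_left_cancel₀ hL.ne' (by linarith)
      rw [hxk] at hxi hxj
      set M := max (-(X i).1) (X j).1 with hM
      have hM0 : 0 < M := lt_max_of_lt_right hxj
      have hML : M < L := by
        refine max_lt ?_ (lt_of_le_of_ne (bound j hj).2 ej)
        have := lt_of_le_of_ne (bound i hi).1 (Ne.symm ei)
        linarith
      have hMi : -M ≤ (X i).1 := by linarith [le_max_left (-(X i).1) (X j).1]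
      have hMj : (X j).1 ≤ M := le_max_right _ _
      have hcr : crossArea (-M, 0) (0, h) (M, 0) = -(2 * M * h) := by
        simp only [crossArea]; ring
      have hcov : ∀ m, (X m).2 = 0 → -M ≤ (X m).1 → (X m).1 ≤ M →
          Covers (-M, 0) (0, h) (M, 0) (X m) := fun m h0 h1 h2 => by
        refine ⟨(M - (X m).1) / (2 * M), 0, (M + (X m).1) / (2 * M),
          div_nonneg (by linarith) (by linarith), le_rfl,
          div_nonneg (by linarith) (by linarith), ?_, ?_, ?_⟩
        · field_simp; ring
        · simp only; field_simp; ring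
        · simp [h0]
      have key := H.min.triple hij hik hjk (s := (-M, 0)) (p := (0, h)) (r := (M, 0))
        (by rw [hcr]; have : 0 < 2 * M * h := by positivity
            linarith)
        (by simp only [sqDist]; ring) (hcov i hi hMi (by linarith))
        (hcov j hj (by linarith) hMj)
        (by rw [show X k = (0, h) from Prod.ext hxk hyk]; exact covers_vertex₂ _ _ _)
      rw [hcr, abs_neg, abs_of_pos (by positivity)] at key
      nlinarith

/-- Reflecting `u` in the foot of the perpendicular from `p` to the line through `u` and `w`
produces an isosceles triangle with apex `p` that covers `w` as soon as `w` is not farther from `p`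
than `u` is. -/
lemma min_reflect (H : ObtuseMinConfig L h X) {i j k : Fin 3} (hij : i ≠ j)
    (hik : i ≠ k) (hjk : j ≠ k) (hd : sqDist (X k) (X j) ≤ sqDist (X i) (X j)) :
    2 * L * h * sqDist (X k) (X i) ≤
      2 * dotAt (X i) (X j) (X k) * |crossArea (X i) (X j) (X k)| := by
  have hne := H.crossArea_ne hij hik hjk
  have hdot := H.acute j k i hjk hij.symm hik.symm
  obtain ⟨a, ha⟩ : ∃ a, a = (X j).1 - (X i).1 := ⟨_, rfl⟩
  obtain ⟨b, hb⟩ : ∃ b, b = (X j).2 - (X i).2 := ⟨_, rfl⟩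
  obtain ⟨c, hc⟩ : ∃ c, c = (X k).1 - (X i).1 := ⟨_, rfl⟩
  obtain ⟨d, hd'⟩ : ∃ d, d = (X k).2 - (X i).2 := ⟨_, rfl⟩
  have hcr : crossArea (X i) (X j) (X k) = a * d - b * c := by
    rw [ha, hb, hc, hd']; rfl
  have hdt : dotAt (X i) (X j) (X k) = a * c + b * d := by
    rw [ha, hb, hc, hd']; rfl
  have hsq : sqDist (X k) (X i) = c ^ 2 + d ^ 2 := by
    rw [hc, hd']; rfl
  have hle : c ^ 2 + d ^ 2 ≤ 2 * (a * c + b * d) := by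
    simp only [sqDist] at hd
    rw [ha, hb, hc, hd']
    linarith
  rw [hdt] at hdot
  rw [hcr] at hne
  have hpos : 0 < c ^ 2 + d ^ 2 := by
    rcases eq_or_ne c 0 with h0 | h0
    · rcases eq_or_ne d 0 with h1 | h1
      · exact absurd (by rw [h0, h1]; ring) hne
      · positivity
    · positivity
  set τ := 2 * (a * c + b * d) / (c ^ 2 + d ^ 2) with hτ
  have hτ0 : 0 < τ := by positivity
  have hτ1 : 1 ≤ τ := by rw [hτ, one_le_div hpos]; exact hle
  have hcrn : crossArea (X i) (X j) ((X i).1 + τ * c, (X i).2 + τ * d) = τ * (a * d - b * c) := by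
    simp only [crossArea, ← ha, ← hb]; ring
  have key := H.min.triple hij hik hjk (s := X i) (p := X j)
    (r := ((X i).1 + τ * c, (X i).2 + τ * d))
    (by rw [hcrn]; exact mul_ne_zero hτ0.ne' hne)
    (by
      have e1 : (X j).1 = (X i).1 + a := by rw [ha]; ring
      have e2 : (X j).2 = (X i).2 + b := by rw [hb]; ring
      simp only [sqDist, e1, e2]
      have : τ * (c ^ 2 + d ^ 2) = 2 * (a * c + b * d) := by rw [hτ]; field_simp
      linear_combination -τ * this)
    (covers_vertex₁ _ _ _) (covers_vertex₂ _ _ _)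
    (by
      refine ⟨1 - 1 / τ, 0, 1 / τ, ?_, le_rfl, by positivity, by ring, ?_, ?_⟩
      · rw [sub_nonneg, div_le_one hτ0]; exact hτ1
      · simp only; field_simp; rw [hc]; ring
      · simp only; field_simp; rw [hd']; ring)
  rw [hcrn, abs_mul, abs_of_pos hτ0, hτ] at key
  rw [hsq, hdt, hcr]
  calc _ ≤ 2 * (a * c + b * d) / (c ^ 2 + d ^ 2) * |a * d - b * c| * (c ^ 2 + d ^ 2) := by gcongr
    _ = _ := by field_simp

lemma corner_of_leg_side (H : ObtuseMinConfig L h X) {i j k : Fin 3} (hij : i ≠ j)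
    (hik : i ≠ k) (hjk : j ≠ k) (hi : X i = (-L, 0)) (hj : X j = (0, h)) :
    CornerPosition L h X := by
  refine ⟨i, j, k, hij, hik, hjk, Or.inl hi, hj, ?_⟩
  have hh := H.pos
  have hlt := H.lt
  have hL : 0 < L := hh.trans H.lt
  by_contra hk
  have hk0 : 0 < (X k).2 := lt_of_le_of_ne (H.base k) (Ne.symm hk)
  have hl := H.left k
  have hr := H.right k
  have hne := H.crossArea_ne hij hik hjk
  set e := (X k).2 with he
  obtain ⟨d, hx⟩ : ∃ d, (X k).1 = d - L := ⟨(X k).1 + L, by ring⟩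
  have hdet : crossArea (X i) (X j) (X k) = L * e - h * d := by
    simp only [crossArea, hi, hj, ← he]; rw [hx]; ring
  rw [hdet] at hne
  rw [hx] at hl hr
  have hd0 : 0 < d := by
    by_contra! h0; nlinarith
  have hd2 : d ≤ 2 * L := by
    by_contra! h0; nlinarith
  have he2 : e ≤ h := by
    by_contra! h0; nlinarith
  have key := H.min_reflect hij hik hjk (by
    simp only [sqDist, hi, hj, ← he]; rw [hx]; nlinarith)
  have hneg : L * e - h * d < 0 := lt_of_le_of_ne (by linarith) hne
  rw [hdet, abs_of_neg hneg] at key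
  simp only [sqDist, dotAt, hi, hj, ← he] at key
  rw [hx] at key
  nlinarith [mul_pos hd0 hk0, mul_pos (mul_pos hd0 hk0) (mul_pos (sub_pos.2 hlt) (add_pos hL hh)),
    mul_pos (mul_pos hL hh) (mul_pos hk0 hk0)]

lemma false_of_leg_interior (H : ObtuseMinConfig L h X) {i j k : Fin 3} (hij : i ≠ j)
    (hik : i ≠ k) (hjk : j ≠ k) {c : ℝ} (hc0 : 0 < c) (hc1 : c < 1)
    (hi : X i = (-L * c, h * (1 - c))) (hj : X j = (0, h)) (hk : (X k).2 = 0) : False := by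
  have hh := H.pos
  have hlt := H.lt
  have hL : 0 < L := hh.trans H.lt
  obtain ⟨κ, hκ⟩ : ∃ κ, (X k).1 = L * (2 * κ - 1) :=
    ⟨((X k).1 / L + 1) / 2, by field_simp; ring⟩
  have hk' : X k = (L * (2 * κ - 1), 0) := Prod.ext hκ hk
  have aj := H.acute i k j hik hij hjk.symm
  have hne := H.crossArea_ne hij hik hjk
  have hrk := H.right k
  have hlk := H.left k
  have hcr : crossArea (X i) (X j) (X k) = -(2 * L * h * κ * c) := by
    simp only [crossArea, hi, hj, hk']; ring
  have hκ0 : 0 < κ := by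
    refine lt_of_le_of_ne ?_ fun h0 => hne (by rw [hcr, ← h0]; ring)
    rw [hk, hκ] at hlk
    by_contra! h0
    nlinarith [mul_pos hh hL]
  set m := h ^ 2 - L * (L * (2 * κ - 1)) with hm
  have hm0 : 0 < m := by
    simp only [dotAt, hi, hj, hk'] at aj
    have : 0 < c * m := by rw [hm]; linarith
    exact pos_of_mul_pos_right this hc0.le
  have hκ1 : κ < 1 := by
    by_contra! h0
    rw [hm] at hm0
    nlinarith [mul_pos hL hL, mul_nonneg (mul_pos hL hL).le (sub_nonneg.2 h0)]
  obtain ⟨l, hl0, hl⟩ : ∃ l : ℝ, 0 < l ∧ l ^ 2 = L ^ 2 + h ^ 2 :=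
    ⟨√(L ^ 2 + h ^ 2), by positivity, Real.sq_sqrt (by positivity)⟩
  obtain ⟨r, hr0, hr⟩ : ∃ r : ℝ, 0 < r ∧ r ^ 2 = (L * (2 * κ - 1)) ^ 2 + h ^ 2 :=
    ⟨√((L * (2 * κ - 1)) ^ 2 + h ^ 2), by positivity, Real.sq_sqrt (by positivity)⟩
  have hrl : r < l := by
    refine lt_of_pow_lt_pow_left₀ 2 hl0.le ?_
    rw [hl, hr]
    nlinarith [mul_pos (mul_pos hL hL) (mul_pos hκ0 (sub_pos.2 hκ1))]
  have hdi : sqDist (X i) (X j) = (c * l) ^ 2 := by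
    rw [mul_pow, hl]; simp only [sqDist, hi, hj]; ring
  have hdk : sqDist (X k) (X j) = r ^ 2 := by
    rw [hr]; simp only [sqDist, hk', hj]; ring
  have hcrp : |crossArea (X i) (X j) (X k)| = 2 * L * h * κ * c := by
    rw [hcr, abs_neg, abs_of_pos (by positivity)]
  have hcrp' : |crossArea (X k) (X j) (X i)| = 2 * L * h * κ * c := by
    rw [← hcrp, ← abs_neg]; congr 1; simp only [crossArea]; ring
  have hLh : 0 < 2 * L * h := by positivity
  rcases le_or_gt (c * l) r with hle | hgt
  · have key := H.min.extend hjk.symm hik.symm hij.symm (by positivity) hle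
      (H.crossArea_ne hjk.symm hik.symm hij.symm) hdk hdi
    rw [hcrp'] at key
    have : l ≤ r * κ := by
      refine le_of_mul_le_mul_left ?_ (mul_pos hLh hc0)
      linarith
    nlinarith
  · have key := H.min.extend hij hik hjk hr0 hgt.le hne hdi hdk
    rw [hcrp] at key
    have h1 : r ≤ c ^ 2 * l * κ := by
      refine le_of_mul_le_mul_left ?_ hLh
      linarith
    have key2 := H.min_reflect hij hik hjk (by
      rw [hdi, hdk]; exact pow_le_pow_left₀ hr0.le hgt.le 2)
    rw [hcrp] at key2
    have hsq : sqDist (X k) (X i) = r ^ 2 - 2 * c * m + c ^ 2 * l ^ 2 := by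
      rw [hr, hl, hm]; simp only [sqDist, hk', hi]; ring
    have hdot : dotAt (X i) (X j) (X k) = c ^ 2 * l ^ 2 - c * m := by
      rw [hl, hm]; simp only [dotAt, hi, hj, hk']; ring
    rw [hsq, hdot] at key2
    have h2 : r ^ 2 - 2 * c * m + c ^ 2 * l ^ 2 ≤ 2 * κ * c * (c ^ 2 * l ^ 2 - c * m) := by
      refine le_of_mul_le_mul_left ?_ hLh
      linarith
    have hid : (1 - c) * (2 * κ * l ^ 2 * c ^ 2 + (r ^ 2 - 2 * m) * c + r ^ 2) =
        r ^ 2 - 2 * c * m + c ^ 2 * l ^ 2 - 2 * κ * c * (c ^ 2 * l ^ 2 - c * m) := by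
      rw [hm, hr, hl]; ring
    have hml : m ≤ l * r := by
      refine le_of_sq_le_sq ?_ (by positivity)
      rw [mul_pow, hl, hr, hm]
      nlinarith [sq_nonneg (L * h * (2 * κ))]
    have hQ : 0 < 2 * κ * l ^ 2 * c ^ 2 + (r ^ 2 - 2 * m) * c + r ^ 2 := by
      have e1 : 2 * (r * l) ≤ 2 * κ * l ^ 2 * c ^ 2 := by
        have := mul_le_mul_of_nonneg_left h1 (by positivity : 0 ≤ 2 * l)
        linarith
      have e2 : m * c ≤ l * r := (mul_le_of_le_one_right hm0.le hc1.le).trans hml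
      have e3 : 0 < r ^ 2 * c := by positivity
      have e4 : 0 < r ^ 2 := by positivity
      linarith
    have := mul_pos (sub_pos.2 hc1) hQ
    linarith

lemma corner_of_left_flush (H : ObtuseMinConfig L h X) {i j : Fin 3} (hij : i ≠ j)
    (hi : L * (X i).2 = h * (L + (X i).1)) (hj : L * (X j).2 = h * (L + (X j).1)) :
    CornerPosition L h X := by
  wlog hle : (X i).1 ≤ (X j).1 generalizing i j
  · exact this hij.symm hj hi (le_of_not_ge hle)
  have hh := H.pos
  have hlt := H.lt
  have hL : 0 < L := hh.trans H.lt
  obtain ⟨k, hik, hjk⟩ := fin3_third i j hij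
  have hne := H.crossArea_ne hij hik hjk
  have hltx : (X i).1 < (X j).1 := by
    refine lt_of_le_of_ne hle fun h0 => hne ?_
    have : (X i).2 = (X j).2 := mul_left_cancel₀ hL.ne' (by rw [hi, hj, h0])
    simp only [crossArea, h0, this]; ring
  have hxj : (X j).1 ≤ 0 := by
    have := H.right j
    by_contra! h0; nlinarith
  have hxi : -L ≤ (X i).1 := by
    have := mul_nonneg hL.le (H.base i)
    by_contra! h0; nlinarith
  have hxj0 : (X j).1 = 0 := by
    obtain ⟨⟨n, hn⟩, -, -⟩ := H.touches
    rcases fin3_exhaust i j k n hij hik hjk with rfl | rfl | rfl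
    · nlinarith
    · have : h * (X n).1 = 0 := by linarith
      exact (mul_eq_zero.1 this).resolve_left hh.ne'
    · by_contra h0
      have hneg : (X j).1 < 0 := lt_of_le_of_ne hxj h0
      have hxn : 0 ≤ (X n).1 := by
        have := H.left n
        by_contra! h0; nlinarith
      have aj := H.acute i n j hik hij hjk.symm
      simp only [dotAt] at aj
      have e : 0 < L ^ 2 * (((X i).1 - (X j).1) * ((X n).1 - (X j).1) +
          ((X i).2 - (X j).2) * ((X n).2 - (X j).2)) := by positivity
      have e2 : L ^ 2 * (((X i).1 - (X j).1) * ((X n).1 - (X j).1) +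
          ((X i).2 - (X j).2) * ((X n).2 - (X j).2)) =
          ((X i).1 - (X j).1) * ((L ^ 2 - h ^ 2) * (X n).1 - (L ^ 2 + h ^ 2) * (X j).1) := by
        have d1 : L * ((X i).2 - (X j).2) = h * ((X i).1 - (X j).1) := by linarith
        have d2 : L * ((X n).2 - (X j).2) = -h * ((X n).1 + (X j).1) := by linarith
        linear_combination L * ((X n).2 - (X j).2) * d1 + h * ((X i).1 - (X j).1) * d2
      rw [e2] at e
      have e3 : 0 ≤ (L ^ 2 - h ^ 2) * (X n).1 := mul_nonneg (by nlinarith) hxn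
      have e4 : 0 < (L ^ 2 + h ^ 2) * -(X j).1 := mul_pos (by positivity) (by linarith)
      nlinarith
  have hXj : X j = (0, h) := by
    refine Prod.ext hxj0 (mul_left_cancel₀ hL.ne' ?_)
    rw [hj, hxj0]; ring
  rcases hxi.eq_or_lt with hxi | hxi
  · refine H.corner_of_leg_side hij hik hjk (Prod.ext hxi.symm ?_) hXj
    have : L * (X i).2 = 0 := by rw [hi, ← hxi]; ring
    exact (mul_eq_zero.1 this).resolve_left hL.ne'
  · exfalso
    have hk : (X k).2 = 0 := by
      obtain ⟨-, ⟨n, hn⟩, -⟩ := H.touches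
      rcases fin3_exhaust i j k n hij hik hjk with rfl | rfl | rfl
      · rw [hn] at hi; nlinarith
      · rw [hXj] at hn; exact absurd hn hh.ne'
      · exact hn
    refine H.false_of_leg_interior hij hik hjk (c := -(X i).1 / L)
      (div_pos (by linarith) hL) (by rw [div_lt_one hL]; linarith) (Prod.ext ?_ ?_) hXj hk
    · simp only; field_simp
    · simp only; field_simp; linarith

theorem cornerPosition (H : ObtuseMinConfig L h X) : CornerPosition L h X := by
  obtain ⟨i, j, hij, ⟨hi, hj⟩ | ⟨hi, hj⟩ | ⟨hi, hj⟩⟩ := H.exists_flush_side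
  · refine CornerPosition.of_reflect (H.reflect.corner_of_left_flush hij ?_ ?_)
    · simpa [sub_eq_add_neg] using hi
    · simpa [sub_eq_add_neg] using hj
  · exact H.corner_of_base_flush hij hi hj
  · exact H.corner_of_left_flush hij hi hj

end ObtuseMinConfig

/-- Coordinates of a point of the plane. -/
def coords (A : Pt) : ℝ × ℝ := (A 0, A 1)

lemma coords_injective : Function.Injective coords := by
  intro A B hAB
  ext i
  fin_cases i
  · exact congrArg Prod.fst hAB
  · exact congrArg Prod.snd hAB

lemma coords_surjective (u : ℝ × ℝ) : ∃ A, coords A = u := ⟨!₂[u.1, u.2], by simp [coords]⟩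

lemma dist_sq_eq_sqDist (A B : Pt) : dist A B ^ 2 = sqDist (coords A) (coords B) := by
  rw [EuclideanSpace.dist_eq, Real.sq_sqrt (by positivity), Fin.sum_univ_two, Real.dist_eq,
    Real.dist_eq, sq_abs, sq_abs]
  rfl

lemma dist_eq_iff_sqDist {A B C D : Pt} :
    dist A B = dist C D ↔ sqDist (coords A) (coords B) = sqDist (coords C) (coords D) := by
  rw [← dist_sq_eq_sqDist, ← dist_sq_eq_sqDist, sq_eq_sq₀ dist_nonneg dist_nonneg]

lemma inner_eq_dotAt (A B C : Pt) :
    inner ℝ (A - C) (B - C) = dotAt (coords C) (coords A) (coords B) := by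
  simp [PiLp.inner_apply, Fin.sum_univ_two, dotAt, coords, mul_comm]

lemma dotAt_pos_of_angle_lt {A C B : Pt} (hlt : ∠ A C B < π / 2) :
    0 < dotAt (coords C) (coords A) (coords B) := by
  rw [← inner_eq_dotAt, ← InnerProductGeometry.cos_angle_mul_norm_mul_norm]
  have hA : A - C ≠ 0 := fun h0 => by
    rw [sub_eq_zero] at h0
    simp [h0] at hlt
  have hB : B - C ≠ 0 := fun h0 => by
    rw [sub_eq_zero] at h0
    simp [h0] at hlt
  have : 0 < Real.cos (InnerProductGeometry.angle (A - C) (B - C)) :=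
    Real.cos_pos_of_mem_Ioo
      ⟨by linarith [InnerProductGeometry.angle_nonneg (A - C) (B - C), Real.pi_pos], hlt⟩
  positivity

lemma pi_div_two_lt_angle_iff (A C B : Pt) :
    π / 2 < ∠ A C B ↔ dotAt (coords C) (coords A) (coords B) < 0 := by
  rw [← inner_eq_dotAt, EuclideanGeometry.angle, InnerProductGeometry.angle, vsub_eq_sub,
    vsub_eq_sub, ← not_le, Real.arccos_le_pi_div_two, not_le]
  constructor
  · intro h0
    by_contra! h1
    exact absurd h0 (not_lt.2 (by positivity))
  · intro h0
    refine div_neg_of_neg_of_pos h0 (mul_pos ?_ ?_) <;> rw [norm_pos_iff] <;> intro h1 <;>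
      simp [h1] at h0

lemma mem_tri_iff (A B C X : Pt) :
    X ∈ tri A B C ↔ Covers (coords A) (coords B) (coords C) (coords X) := by
  have hset : X ∈ tri A B C ↔ ∃ a b c : ℝ, 0 ≤ a ∧ 0 ≤ b ∧ 0 ≤ c ∧ a + b + c = 1 ∧
      a • A + b • B + c • C = X := by
    rw [tri, convexHull_insert (by simp), convexHull_pair]
    simp only [mem_convexJoin, Set.mem_singleton_iff, exists_eq_left, segment, Set.mem_ofPred_eq]
    constructor
    · rintro ⟨Y, ⟨b, c, hb, hc, hbc, rfl⟩, a, d, ha, hd, had, rfl⟩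
      exact ⟨a, d * b, d * c, ha, by positivity, by positivity,
        by linear_combination had + d * hbc, by module⟩
    · rintro ⟨a, b, c, ha, hb, hc, hs, rfl⟩
      rcases eq_or_ne (b + c) 0 with h0 | h0
      · have hb0 : b = 0 := by linarith
        have hc0 : c = 0 := by linarith
        refine ⟨B, ⟨1, 0, by simp⟩, a, 0, ha, le_rfl, by linarith, by simp [hb0, hc0]⟩
      · refine ⟨(b / (b + c)) • B + (c / (b + c)) • C,
          ⟨b / (b + c), c / (b + c), by positivity, by positivity, by field_simp, rfl⟩,
          a, b + c, ha, by positivity, by linarith, ?_⟩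
        rw [smul_add, smul_smul, smul_smul, mul_div_cancel₀ _ h0, mul_div_cancel₀ _ h0, add_assoc]
  rw [hset]
  refine exists_congr fun a => exists_congr fun b => exists_congr fun c => ?_
  have : a • A + b • B + c • C = X ↔
      (coords X).1 = a * (coords A).1 + b * (coords B).1 + c * (coords C).1 ∧
      (coords X).2 = a * (coords A).2 + b * (coords B).2 + c * (coords C).2 := by
    rw [← coords_injective.eq_iff, Prod.ext_iff]
    simp [coords, eq_comm]
  rw [this]

lemma tri_subset_iff (A B C S P R : Pt) :
    tri A B C ⊆ tri S P R ↔ A ∈ tri S P R ∧ B ∈ tri S P R ∧ C ∈ tri S P R := by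
  rw [tri, tri, (convex_convexHull ℝ _).convexHull_subset_iff]
  simp [Set.insert_subset_iff]

lemma exists_triArea_eq :
    ∃ κ : ℝ, 0 ≤ κ ∧ ∀ S P R, triArea S P R =
      |crossArea (coords S) (coords P) (coords R)| * κ := by
  set b := (EuclideanSpace.basisFun (Fin 2) ℝ).toBasis with hb
  refine ⟨triArea 0 (b 0) (b 1), ENNReal.toReal_nonneg, fun S P R => ?_⟩
  set f : Pt →ₗ[ℝ] Pt := Matrix.toLin b b !![P 0 - S 0, R 0 - S 0; P 1 - S 1, R 1 - S 1] with hf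
  have hf0 : f (b 0) = P - S := by
    rw [hf, Matrix.toLin_self, Fin.sum_univ_two]
    ext i
    fin_cases i <;> simp [hb]
  have hf1 : f (b 1) = R - S := by
    rw [hf, Matrix.toLin_self, Fin.sum_univ_two]
    ext i
    fin_cases i <;> simp [hb]
  have himg : tri S P R = (fun x => S + x) '' (f '' tri 0 (b 0) (b 1)) := by
    rw [tri, tri, LinearMap.image_convexHull]
    have := (AffineEquiv.constVAdd ℝ Pt S).toAffineMap.image_convexHull
      (f '' {0, b 0, b 1})
    simp only [Set.image_insert_eq, Set.image_singleton, map_zero, hf0, hf1] at this ⊢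
    simp at this
    simpa using this.symm
  have hdet : LinearMap.det f = crossArea (coords S) (coords P) (coords R) := by
    rw [hf, LinearMap.det_toLin, Matrix.det_fin_two]
    simp only [crossArea, coords, Matrix.of_apply, Matrix.cons_val', Matrix.cons_val_zero,
      Matrix.cons_val_one, Matrix.cons_val_fin_one]
    ring
  rw [triArea, himg, Set.image_add_left, measure_preimage_add,
    Measure.addHaar_image_linearMap, hdet, ENNReal.toReal_mul,
    ENNReal.toReal_ofReal (abs_nonneg _), triArea]

lemma triArea_pos {A B C : Pt} (hABC : AffineIndependent ℝ ![A, B, C]) : 0 < triArea A B C := by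
  have hspan : affineSpan ℝ ({A, B, C} : Set Pt) = ⊤ := by
    have := hABC.affineSpan_eq_top_iff_card_eq_finrank_add_one.2 (by simp)
    rwa [Matrix.range_cons, Matrix.range_cons, Matrix.range_cons, Matrix.range_empty,
      Set.union_empty, Set.singleton_union, Set.singleton_union] at this
  obtain hne := interior_convexHull_nonempty_iff_affineSpan_eq_top.2 hspan
  have hpos : 0 < volume (tri A B C) :=
    (isOpen_interior.measure_pos volume hne).trans_le (measure_mono interior_subset)
  have hfin : volume (tri A B C) < ⊤ :=
    (isBounded_convexHull.2 (Set.toFinite _).isBounded).measure_lt_top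
  exact ENNReal.toReal_pos hpos.ne' hfin.ne

lemma affineIndependent_iff_crossArea_ne (A B C : Pt) :
    AffineIndependent ℝ ![A, B, C] ↔ crossArea (coords A) (coords B) (coords C) ≠ 0 := by
  constructor
  · intro hABC h0
    obtain ⟨κ, -, hκ⟩ := exists_triArea_eq
    have := triArea_pos hABC
    rw [hκ, h0] at this
    simp at this
  · intro h0
    rw [affineIndependent_iff_not_collinear_set, collinear_iff_of_mem (p₀ := A) (by simp)]
    rintro ⟨v, hv⟩
    obtain ⟨x, hx⟩ := hv B (by simp)
    obtain ⟨y, hy⟩ := hv C (by simp)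
    apply h0
    rw [hx, hy]
    simp only [crossArea, coords, vadd_eq_add, PiLp.add_apply, PiLp.smul_apply, smul_eq_mul]
    ring

lemma exists_pos_triArea_eq {A B C : Pt} (hABC : AffineIndependent ℝ ![A, B, C]) :
    ∃ κ : ℝ, 0 < κ ∧ ∀ S P R, triArea S P R =
      |crossArea (coords S) (coords P) (coords R)| * κ := by
  obtain ⟨κ, hκ0, hκ⟩ := exists_triArea_eq
  refine ⟨κ, lt_of_le_of_ne hκ0 fun h0 => ?_, hκ⟩
  have := triArea_pos hABC
  rw [hκ, ← h0, mul_zero] at this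
  exact lt_irrefl _ this

lemma tri_perm (S P R : Pt) : tri P S R = tri S P R ∧ tri S R P = tri S P R := by
  constructor
  · rw [tri, tri, Set.insert_comm]
  · rw [tri, tri, Set.pair_comm]

lemma vertex_mem_of_tri_eq {S P R A B C : Pt} (h0 : crossArea (coords A) (coords B) (coords C) ≠ 0)
    (heq : tri S P R = tri A B C) : A = S ∨ A = P ∨ A = R := by
  suffices hA : A ∈ (tri S P R).extremePoints ℝ by
    simpa using extremePoints_convexHull_subset hA
  rw [heq, mem_extremePoints]
  refine ⟨(mem_tri_iff _ _ _ _).2 (covers_vertex₁ _ _ _), fun x hx y hy hxy => ?_⟩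
  obtain ⟨t, u, ht, hu, htu, hA⟩ := hxy
  obtain ⟨a₁, b₁, c₁, ha₁, hb₁, hc₁, hs₁, hx1, hx2⟩ := (mem_tri_iff _ _ _ _).1 hx
  obtain ⟨a₂, b₂, c₂, ha₂, hb₂, hc₂, hs₂, hy1, hy2⟩ := (mem_tri_iff _ _ _ _).1 hy
  have e1 : (coords A).1 = t * (coords x).1 + u * (coords y).1 := by
    rw [← hA]; simp [coords]
  have e2 : (coords A).2 = t * (coords x).2 + u * (coords y).2 := by
    rw [← hA]; simp [coords]
  rw [hx1, hy1] at e1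
  rw [hx2, hy2] at e2
  obtain rfl : a₁ = 1 - b₁ - c₁ := by linarith
  obtain rfl : a₂ = 1 - b₂ - c₂ := by linarith
  obtain rfl : u = 1 - t := by linarith
  have hb : (t * b₁ + (1 - t) * b₂) * crossArea (coords A) (coords B) (coords C) = 0 := by
    simp only [crossArea]
    linear_combination -((coords C).2 - (coords A).2) * e1 + ((coords C).1 - (coords A).1) * e2
  have hc : (t * c₁ + (1 - t) * c₂) * crossArea (coords A) (coords B) (coords C) = 0 := by
    simp only [crossArea]
    linear_combination ((coords B).2 - (coords A).2) * e1 - ((coords B).1 - (coords A).1) * e2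
  replace hb := (mul_eq_zero.1 hb).resolve_right h0
  replace hc := (mul_eq_zero.1 hc).resolve_right h0
  have p1 := mul_nonneg ht.le hb₁
  have p2 := mul_nonneg hu.le hb₂
  have p3 := mul_nonneg ht.le hc₁
  have p4 := mul_nonneg hu.le hc₂
  have q1 : b₁ = 0 := (mul_eq_zero.1 (by linarith : t * b₁ = 0)).resolve_left ht.ne'
  have q2 : b₂ = 0 := (mul_eq_zero.1 (by linarith : (1 - t) * b₂ = 0)).resolve_left hu.ne'
  have q3 : c₁ = 0 := (mul_eq_zero.1 (by linarith : t * c₁ = 0)).resolve_left ht.ne'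
  have q4 : c₂ = 0 := (mul_eq_zero.1 (by linarith : (1 - t) * c₂ = 0)).resolve_left hu.ne'
  subst q1 q2 q3 q4
  exact ⟨coords_injective (Prod.ext (by rw [hx1]; ring) (by rw [hx2]; ring)),
    coords_injective (Prod.ext (by rw [hy1]; ring) (by rw [hy2]; ring))⟩

/-- The point with coordinates `x` in the orthonormal frame with origin `m`, first axis `e` and
second axis obtained from `e` by a quarter turn of sign `ε`. -/
def frameMap (m e : ℝ × ℝ) (ε : ℝ) (x : ℝ × ℝ) : ℝ × ℝ :=
  (m.1 + x.1 * e.1 - ε * x.2 * e.2, m.2 + x.1 * e.2 + ε * x.2 * e.1)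

section frame

variable {m e : ℝ × ℝ} {ε : ℝ}

lemma exists_frameMap_eq (he : e.1 ^ 2 + e.2 ^ 2 = 1) (hε : ε ^ 2 = 1) (u : ℝ × ℝ) :
    ∃ x, frameMap m e ε x = u := by
  refine ⟨((u.1 - m.1) * e.1 + (u.2 - m.2) * e.2, ε * ((u.2 - m.2) * e.1 - (u.1 - m.1) * e.2)),
    Prod.ext ?_ ?_⟩
  · simp only [frameMap]
    linear_combination (u.1 - m.1) * he - ((u.2 - m.2) * e.1 - (u.1 - m.1) * e.2) * e.2 * hε
  · simp only [frameMap]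
    linear_combination (u.2 - m.2) * he + ((u.2 - m.2) * e.1 - (u.1 - m.1) * e.2) * e.1 * hε

lemma crossArea_frameMap (he : e.1 ^ 2 + e.2 ^ 2 = 1) (s p r : ℝ × ℝ) :
    crossArea (frameMap m e ε s) (frameMap m e ε p) (frameMap m e ε r) = ε * crossArea s p r := by
  simp only [crossArea, frameMap]
  linear_combination ε * ((p.1 - s.1) * (r.2 - s.2) - (p.2 - s.2) * (r.1 - s.1)) * he

lemma dotAt_frameMap (he : e.1 ^ 2 + e.2 ^ 2 = 1) (hε : ε ^ 2 = 1) (w u v : ℝ × ℝ) :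
    dotAt (frameMap m e ε w) (frameMap m e ε u) (frameMap m e ε v) = dotAt w u v := by
  simp only [dotAt, frameMap]
  linear_combination ((u.1 - w.1) * (v.1 - w.1) + ε ^ 2 * (u.2 - w.2) * (v.2 - w.2)) * he +
    (u.2 - w.2) * (v.2 - w.2) * hε

lemma sqDist_eq_dotAt (u v : ℝ × ℝ) : sqDist u v = dotAt v u u := by
  simp only [sqDist, dotAt]
  ring

lemma Covers.frameMap {s p r x : ℝ × ℝ} (h : Covers s p r x) :
    Covers (frameMap m e ε s) (frameMap m e ε p) (frameMap m e ε r) (frameMap m e ε x) := by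
  obtain ⟨a, b, c, ha, hb, hc, hs, h1, h2⟩ := h
  refine ⟨a, b, c, ha, hb, hc, hs, ?_, ?_⟩
  · simp only [_root_.frameMap]
    rw [h1, h2]
    linear_combination -m.1 * hs
  · simp only [_root_.frameMap]
    rw [h1, h2]
    linear_combination -m.2 * hs

lemma frameMap_injective (he : e.1 ^ 2 + e.2 ^ 2 = 1) (hε : ε ^ 2 = 1) :
    Function.Injective (frameMap m e ε) := by
  intro x y hxy
  have h0 : sqDist x y = 0 := by
    rw [sqDist_eq_dotAt, ← dotAt_frameMap (m := m) he hε, hxy]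
    simp [dotAt]
  simp only [sqDist] at h0
  exact Prod.ext (by nlinarith [sq_nonneg (x.1 - y.1), sq_nonneg (x.2 - y.2)])
    (by nlinarith [sq_nonneg (x.1 - y.1), sq_nonneg (x.2 - y.2)])

end frame

/-- Every nondegenerate isosceles triangle is symmetric about an axis of a suitable frame. -/
lemma exists_isosceles_frame {s p r : ℝ × ℝ} (h0 : crossArea s p r ≠ 0)
    (hi : sqDist p s = sqDist p r) :
    ∃ (m e : ℝ × ℝ) (ε L h : ℝ), e.1 ^ 2 + e.2 ^ 2 = 1 ∧ ε ^ 2 = 1 ∧ 0 < L ∧ 0 < h ∧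
      frameMap m e ε (-L, 0) = s ∧ frameMap m e ε (0, h) = p ∧ frameMap m e ε (L, 0) = r := by
  have hD : 0 < (r.1 - s.1) ^ 2 + (r.2 - s.2) ^ 2 := by
    by_contra! hle
    have e1 : r.1 - s.1 = 0 := by nlinarith [sq_nonneg (r.1 - s.1), sq_nonneg (r.2 - s.2)]
    have e2 : r.2 - s.2 = 0 := by nlinarith [sq_nonneg (r.1 - s.1), sq_nonneg (r.2 - s.2)]
    exact h0 (by simp [crossArea, e1, e2])
  set d := √((r.1 - s.1) ^ 2 + (r.2 - s.2) ^ 2) with hd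
  have hd0 : 0 < d := Real.sqrt_pos.2 hD
  have hd2 : d ^ 2 = (r.1 - s.1) ^ 2 + (r.2 - s.2) ^ 2 := Real.sq_sqrt hD.le
  obtain ⟨ε, hε, h, hh, hch⟩ : ∃ ε : ℝ, ε ^ 2 = 1 ∧ ∃ h : ℝ, 0 < h ∧
      ε * h * d = -crossArea s p r := by
    rcases lt_or_gt_of_ne h0 with hlt | hgt
    · exact ⟨1, by norm_num, -crossArea s p r / d, by have := neg_pos.2 hlt; positivity,
        by field_simp⟩
    · exact ⟨-1, by norm_num, crossArea s p r / d, by positivity, by field_simp⟩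
  simp only [crossArea] at hch
  simp only [sqDist] at hi
  refine ⟨((s.1 + r.1) / 2, (s.2 + r.2) / 2), ((r.1 - s.1) / d, (r.2 - s.2) / d), ε, d / 2, h,
    ?_, hε, by positivity, hh, ?_, ?_, ?_⟩
  · simp only
    field_simp
    rw [hd2]
  · refine Prod.ext ?_ ?_ <;> simp only [frameMap] <;> field_simp <;> ring
  · refine Prod.ext ?_ ?_ <;> simp only [frameMap]
    · have : (s.1 + r.1) / 2 + 0 * ((r.1 - s.1) / d) - ε * h * ((r.2 - s.2) / d) - p.1 = 0 := by
        have h2 : d ^ 2 * ((s.1 + r.1) / 2 - p.1) - (ε * h * d) * (r.2 - s.2) = 0 := by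
          rw [hd2, hch]
          linear_combination -(r.1 - s.1) / 2 * hi
        rw [zero_mul, add_zero, ← zero_div (d ^ 2), ← h2]
        field_simp
        ring
      linarith
    · have : (s.2 + r.2) / 2 + 0 * ((r.2 - s.2) / d) + ε * h * ((r.1 - s.1) / d) - p.2 = 0 := by
        have h2 : d ^ 2 * ((s.2 + r.2) / 2 - p.2) + (ε * h * d) * (r.1 - s.1) = 0 := by
          rw [hd2, hch]
          linear_combination -(r.2 - s.2) / 2 * hi
        rw [zero_mul, add_zero, ← zero_div (d ^ 2), ← h2]
        field_simp
        ring
      linarith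
  · refine Prod.ext ?_ ?_ <;> simp only [frameMap] <;> field_simp <;> ring

/-- An acute triangle in a smallest isosceles container that is obtuse at its apex `p` has
vertices at `p` and at an end of the base, and a vertex on the base. -/
lemma exists_corner {A : Fin 3 → ℝ × ℝ} {s p r : ℝ × ℝ} (h0 : crossArea s p r ≠ 0)
    (hi : sqDist p s = sqDist p r) (hobt : dotAt p s r < 0)
    (hacute : ∀ i j k, i ≠ j → i ≠ k → j ≠ k → 0 < dotAt (A k) (A i) (A j))
    (hcov : ∀ i, Covers s p r (A i)) (hmin : MinDoubleArea |crossArea s p r| A) :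
    ∃ i j k, i ≠ j ∧ i ≠ k ∧ j ≠ k ∧ (A i = s ∨ A i = r) ∧ A j = p ∧
      ∃ t : ℝ, 0 ≤ t ∧ t ≤ 1 ∧ A k = (s.1 + t * (r.1 - s.1), s.2 + t * (r.2 - s.2)) := by
  obtain ⟨m, e, ε, L, h, he, hε, hL, hh, rfl, rfl, rfl⟩ := exists_isosceles_frame h0 hi
  choose X hX using fun i => exists_frameMap_eq (m := m) he hε (A i)
  obtain rfl : A = fun i => frameMap m e ε (X i) := funext fun i => (hX i).symm
  have hεabs : |ε| = 1 := by rw [← sq_eq_sq₀ (abs_nonneg _) zero_le_one, sq_abs, hε, one_pow]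
  have habs (s p r : ℝ × ℝ) :
      |crossArea (frameMap m e ε s) (frameMap m e ε p) (frameMap m e ε r)| = |crossArea s p r| := by
    rw [crossArea_frameMap he, abs_mul, hεabs, one_mul]
  have hcov' : ∀ i, Covers (-L, 0) (0, h) (L, 0) (X i) := by
    intro i
    obtain ⟨a, b, c, ha, hb, hc, hs, h1, h2⟩ := hcov i
    have : X i = (a * -L + b * 0 + c * L, a * 0 + b * h + c * 0) := by
      refine frameMap_injective (m := m) he hε (Prod.ext ?_ ?_)
      · rw [h1]
        simp only [frameMap]
        linear_combination m.1 * hs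
      · rw [h2]
        simp only [frameMap]
        linear_combination m.2 * hs
    exact ⟨a, b, c, ha, hb, hc, hs, by rw [this], by rw [this]⟩
  have H : ObtuseMinConfig L h X :=
    { pos := hh
      lt := by
        rw [dotAt_frameMap he hε] at hobt
        simp only [dotAt] at hobt
        nlinarith
      base := fun i => by
        obtain ⟨a, b, c, ha, hb, hc, hs, h1, h2⟩ := hcov' i
        rw [h2]
        simp only
        nlinarith [mul_nonneg hb hh.le]
      right := fun i => by
        obtain ⟨a, b, c, ha, hb, hc, hs, h1, h2⟩ := hcov' i
        rw [h1, h2]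
        obtain rfl : b = 1 - a - c := by linarith
        simp only
        nlinarith [mul_nonneg ha (mul_pos hL hh).le]
      left := fun i => by
        obtain ⟨a, b, c, ha, hb, hc, hs, h1, h2⟩ := hcov' i
        rw [h1, h2]
        obtain rfl : b = 1 - a - c := by linarith
        simp only
        nlinarith [mul_nonneg hc (mul_pos hL hh).le]
      acute := fun i j k hij hik hjk => by
        have := hacute i j k hij hik hjk
        rwa [dotAt_frameMap he hε] at this
      min := fun s p r hne hi' hc => by
        have := hmin (frameMap m e ε s) (frameMap m e ε p) (frameMap m e ε r)
          (by rw [← abs_pos, habs]; exact abs_pos.2 hne)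
          (by rw [sqDist_eq_dotAt, sqDist_eq_dotAt, dotAt_frameMap he hε,
            dotAt_frameMap he hε, ← sqDist_eq_dotAt, ← sqDist_eq_dotAt, hi'])
          (fun i => (hc i).frameMap)
        rw [habs, habs] at this
        refine le_trans (le_of_eq ?_) this
        rw [← abs_neg, abs_of_pos] <;> simp only [crossArea] <;> nlinarith [mul_pos hL hh] }
  obtain ⟨i, j, k, hij, hik, hjk, hXi, hXj, hXk⟩ := H.cornerPosition
  refine ⟨i, j, k, hij, hik, hjk, by rcases hXi with h1 | h1 <;> simp [h1], by simp [hXj],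
    ((X k).1 + L) / (2 * L), ?_, ?_, ?_⟩
  · have := H.left k
    rw [hXk] at this
    have : 0 ≤ L + (X k).1 := by nlinarith
    rw [add_comm]
    positivity
  · have := H.right k
    rw [hXk] at this
    rw [div_le_one (by positivity)]
    nlinarith
  · refine Prod.ext ?_ ?_ <;> simp only [frameMap, hXk] <;> field_simp <;> ring

/-- A point `z ≠ u` on the line through `u` and `w` at the same distance from `v` as `u`. -/
lemma ray_param {u v w z : ℝ × ℝ} {τ : ℝ} (hτ : τ ≠ 0)
    (hz : z = (u.1 + τ * (w.1 - u.1), u.2 + τ * (w.2 - u.2))) (hd : sqDist z v = sqDist u v) :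
    τ * sqDist w u = sqDist v u + sqDist w u - sqDist v w := by
  subst hz
  refine mul_left_cancel₀ hτ ?_
  simp only [sqDist] at hd ⊢
  linear_combination hd

lemma OnRay.exists_coords {U W Z : Pt} (h : OnRay U W Z) (hWU : W ≠ U) :
    ∃ τ : ℝ, 0 ≤ τ ∧ coords Z = ((coords U).1 + τ * ((coords W).1 - (coords U).1),
      (coords U).2 + τ * ((coords W).2 - (coords U).2)) := by
  obtain ⟨τ, hτ, hZ⟩ := h.exists_nonneg_left (sub_ne_zero.2 hWU)
  obtain rfl : Z = U + τ • (W - U) := by rw [hZ]; abel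
  exact ⟨τ, hτ, by simp [coords]⟩

lemma OnRay.exists_param {U V W Z : Pt} (h : OnRay U W Z) (hWU : W ≠ U) (hZU : Z ≠ U)
    (hd : dist Z V = dist U V) :
    ∃ τ : ℝ, 0 < τ ∧ coords Z = ((coords U).1 + τ * ((coords W).1 - (coords U).1),
      (coords U).2 + τ * ((coords W).2 - (coords U).2)) ∧
      τ * dist W U ^ 2 = dist V U ^ 2 + dist W U ^ 2 - dist V W ^ 2 := by
  obtain ⟨τ, hτ, hZ⟩ := h.exists_coords hWU
  have hτ0 : τ ≠ 0 := by
    rintro rfl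
    exact hZU (coords_injective (by rw [hZ]; simp))
  refine ⟨τ, lt_of_le_of_ne hτ hτ0.symm, hZ, ?_⟩
  simp only [dist_sq_eq_sqDist]
  exact ray_param hτ0 hZ (dist_eq_iff_sqDist.1 hd)

lemma OnRay.unique {U V W Z Z' : Pt} (h : OnRay U W Z) (h' : OnRay U W Z') (hWU : W ≠ U)
    (hZU : Z ≠ U) (hZU' : Z' ≠ U) (hd : dist Z V = dist U V) (hd' : dist Z' V = dist U V) :
    Z = Z' := by
  obtain ⟨τ, -, hZ, hτ⟩ := h.exists_param hWU hZU hd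
  obtain ⟨τ', -, hZ', hτ'⟩ := h'.exists_param hWU hZU' hd'
  obtain rfl : τ = τ' :=
    mul_right_cancel₀ (pow_ne_zero 2 (dist_ne_zero.2 hWU)) (hτ.trans hτ'.symm)
  exact coords_injective (hZ.trans hZ'.symm)

lemma crossArea_swap₁₂ (s p r : ℝ × ℝ) : crossArea p s r = -crossArea s p r := by
  simp only [crossArea]
  ring

lemma crossArea_swap₂₃ (s p r : ℝ × ℝ) : crossArea s r p = -crossArea s p r := by
  simp only [crossArea]
  ring

namespace IsIsoscelesContainer

variable {A B C S P R : Pt}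

lemma crossArea_ne (h : IsIsoscelesContainer A B C S P R) :
    crossArea (coords S) (coords P) (coords R) ≠ 0 :=
  (affineIndependent_iff_crossArea_ne _ _ _).1 h.1

lemma swap₁₂ (h : IsIsoscelesContainer A B C S P R) : IsIsoscelesContainer A B C P S R := by
  refine ⟨?_, ?_, by rw [(tri_perm S P R).1]; exact h.2.2⟩
  · rw [affineIndependent_iff_crossArea_ne, crossArea_swap₁₂, neg_ne_zero]
    exact h.crossArea_ne
  · rcases h.2.1 with h1 | h1 | h1
    · exact Or.inl (by simpa only [dist_comm] using h1.symm)
    · exact Or.inr (Or.inr (by simpa only [dist_comm] using h1.symm))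
    · exact Or.inr (Or.inl (by simpa only [dist_comm] using h1.symm))

lemma swap₂₃ (h : IsIsoscelesContainer A B C S P R) : IsIsoscelesContainer A B C S R P := by
  refine ⟨?_, ?_, by rw [(tri_perm S P R).2]; exact h.2.2⟩
  · rw [affineIndependent_iff_crossArea_ne, crossArea_swap₂₃, neg_ne_zero]
    exact h.crossArea_ne
  · rcases h.2.1 with h1 | h1 | h1
    · exact Or.inr (Or.inr (by simpa only [dist_comm] using h1.symm))
    · exact Or.inr (Or.inl (by simpa only [dist_comm] using h1.symm))
    · exact Or.inl (by simpa only [dist_comm] using h1.symm)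

/-- The obtuse angle of an isosceles triangle is the one between the equal sides. -/
lemma sqDist_eq_of_obtuse (h : IsIsoscelesContainer A B C S P R)
    (hobt : dotAt (coords P) (coords S) (coords R) < 0) :
    sqDist (coords P) (coords S) = sqDist (coords P) (coords R) := by
  have hlaw : sqDist (coords R) (coords S) = sqDist (coords P) (coords S) +
      sqDist (coords P) (coords R) - 2 * dotAt (coords P) (coords S) (coords R) := by
    simp only [sqDist, dotAt]
    ring
  have n1 : 0 ≤ sqDist (coords P) (coords S) := by rw [← dist_sq_eq_sqDist]; positivity
  have n2 : 0 ≤ sqDist (coords P) (coords R) := by rw [← dist_sq_eq_sqDist]; positivity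
  rcases h.2.1 with h1 | h1 | h1
  · rw [dist_eq_iff_sqDist] at h1
    linarith
  · rw [dist_comm S P, dist_eq_iff_sqDist] at h1
    linarith
  · rwa [dist_comm S P, dist_eq_iff_sqDist] at h1

end IsIsoscelesContainer

namespace IsMinIsoscelesContainer

variable {A B C S P R : Pt}

lemma swap₁₂ (h : IsMinIsoscelesContainer A B C S P R) :
    IsMinIsoscelesContainer A B C P S R :=
  ⟨h.1.swap₁₂, by rw [triArea, (tri_perm S P R).1]; exact h.2⟩

lemma swap₂₃ (h : IsMinIsoscelesContainer A B C S P R) :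
    IsMinIsoscelesContainer A B C S R P :=
  ⟨h.1.swap₂₃, by rw [triArea, (tri_perm S P R).2]; exact h.2⟩

lemma minDoubleArea (h : IsMinIsoscelesContainer A B C S P R) {U V W : Pt}
    (htri : tri S P R = tri U V W) :
    MinDoubleArea |crossArea (coords U) (coords V) (coords W)|
      (fun i => coords (![A, B, C] i)) := by
  intro s p r h0 hi hcov
  obtain ⟨S', rfl⟩ := coords_surjective s
  obtain ⟨P', rfl⟩ := coords_surjective p
  obtain ⟨R', rfl⟩ := coords_surjective r
  obtain ⟨κ, hκ, harea⟩ := exists_pos_triArea_eq h.1.1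
  have hle := h.2 S' P' R' ⟨(affineIndependent_iff_crossArea_ne _ _ _).2 h0,
    Or.inr (Or.inr (by rw [dist_comm S' P', dist_eq_iff_sqDist, hi])), by
      rw [tri_subset_iff, mem_tri_iff, mem_tri_iff, mem_tri_iff]
      exact ⟨hcov 0, hcov 1, hcov 2⟩⟩
  rw [triArea, htri, ← triArea, harea, harea] at hle
  exact le_of_mul_le_mul_right hle hκ

/-- A smallest isosceles container of an acute triangle that is obtuse at `P` arises from the
triangle by extending one of its sides. -/
lemma exists_special (h : IsMinIsoscelesContainer A B C S P R)
    (hacute : ∠ B A C < π / 2 ∧ ∠ A B C < π / 2 ∧ ∠ A C B < π / 2)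
    (hobt : π / 2 < ∠ S P R) :
    ∃ i j k : Fin 3, i ≠ j ∧ i ≠ k ∧ j ≠ k ∧ ∃ Z, tri S P R = tri (![A, B, C] i) (![A, B, C] j) Z ∧
      OnRay (![A, B, C] i) (![A, B, C] k) Z ∧ Z ≠ ![A, B, C] i ∧
      dist Z (![A, B, C] j) = dist (![A, B, C] i) (![A, B, C] j) ∧
      dist (![A, B, C] k) (![A, B, C] j) ≤ dist (![A, B, C] i) (![A, B, C] j) := by
  rw [pi_div_two_lt_angle_iff] at hobt
  have hi := h.1.sqDist_eq_of_obtuse hobt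
  have h0 := h.1.crossArea_ne
  have hPS : dist P S = dist P R := dist_eq_iff_sqDist.2 hi
  have hSR : S ≠ R := by
    rintro rfl
    exact h0 (by simp only [crossArea]; ring)
  obtain ⟨i, j, k, hij, hik, hjk, hXi, hXj, t, ht0, ht1, hXk⟩ :=
    exists_corner (A := fun i => coords (![A, B, C] i)) h0 hi hobt
      (by
        obtain ⟨h1, h2, h3⟩ := hacute
        have h1' := dotAt_pos_of_angle_lt (angle_comm B A C ▸ h1)
        have h2' := dotAt_pos_of_angle_lt (angle_comm A B C ▸ h2)
        have h3' := dotAt_pos_of_angle_lt (angle_comm A C B ▸ h3)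
        replace h1 := dotAt_pos_of_angle_lt h1
        replace h2 := dotAt_pos_of_angle_lt h2
        replace h3 := dotAt_pos_of_angle_lt h3
        intro i j k
        fin_cases i <;> fin_cases j <;> fin_cases k <;> simp <;> assumption)
      (by
        have := h.1.2.2
        rw [tri_subset_iff, mem_tri_iff, mem_tri_iff, mem_tri_iff] at this
        intro i
        fin_cases i
        exacts [this.1, this.2.1, this.2.2])
      (h.minDoubleArea rfl)
  refine ⟨i, j, k, hij, hik, hjk, ?_⟩
  generalize ![A, B, C] i = U at *
  generalize ![A, B, C] j = V at *
  generalize ![A, B, C] k = W at *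
  obtain rfl : V = P := coords_injective hXj
  have hW : W = S + t • (R - S) := coords_injective (by rw [hXk]; simp [coords])
  have hWV : dist W V ≤ dist V S := by
    rw [← sq_le_sq₀ dist_nonneg dist_nonneg, dist_sq_eq_sqDist, dist_sq_eq_sqDist, hXk]
    have : sqDist ((coords S).1 + t * ((coords R).1 - (coords S).1),
        (coords S).2 + t * ((coords R).2 - (coords S).2)) (coords V) =
        (1 - t) * sqDist (coords V) (coords S) + t * sqDist (coords V) (coords R) -
          t * (1 - t) * sqDist (coords S) (coords R) := by
      simp only [sqDist]
      ring
    rw [this, ← hi]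
    have : 0 ≤ t * (1 - t) * sqDist (coords S) (coords R) := by
      rw [← dist_sq_eq_sqDist]
      exact mul_nonneg (mul_nonneg ht0 (by linarith)) (by positivity)
    linarith
  rcases hXi with hU | hU
  · obtain rfl : U = S := coords_injective hU
    refine ⟨R, rfl, ?_, hSR.symm, by rw [dist_comm R, dist_comm U, hPS], by rwa [dist_comm U]⟩
    rw [OnRay, hW, add_sub_cancel_left]
    exact SameRay.sameRay_nonneg_smul_left _ ht0
  · obtain rfl : U = R := coords_injective hU
    refine ⟨S, ?_, ?_, hSR, by rw [dist_comm S, dist_comm U, hPS], by rwa [dist_comm U, ← hPS]⟩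
    · rw [← (tri_perm S V U).1, ← (tri_perm U V S).1, (tri_perm V S U).2]
    · have : W - U = (1 - t) • (S - U) := by rw [hW]; module
      rw [OnRay, this]
      exact SameRay.sameRay_nonneg_smul_left _ (by linarith)

end IsMinIsoscelesContainer

lemma crossArea_ray {u v w z : ℝ × ℝ} {τ : ℝ}
    (hz : z = (u.1 + τ * (w.1 - u.1), u.2 + τ * (w.2 - u.2))) :
    crossArea u v z = τ * crossArea u v w := by
  subst hz
  simp only [crossArea]
  ring

lemma abs_crossArea_perm (X : Fin 3 → ℝ × ℝ) {i j k : Fin 3} (hij : i ≠ j) (hik : i ≠ k)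
    (hjk : j ≠ k) : |crossArea (X i) (X j) (X k)| = |crossArea (X 0) (X 1) (X 2)| := by
  have h : crossArea (X i) (X j) (X k) = crossArea (X 0) (X 1) (X 2) ∨
      crossArea (X i) (X j) (X k) = -crossArea (X 0) (X 1) (X 2) := by
    fin_cases i <;> fin_cases j <;> simp at hij <;> fin_cases k <;> simp at hik hjk <;>
      simp only [crossArea, Fin.zero_eta, Fin.mk_one, Fin.reduceFinMk, true_or] <;>
      first | (left; ring1) | (right; ring1)
  exact abs_eq_abs.2 h

/-- If extending a side by the ratio `τ` gives a smallest container, then `τ` is at most the ratio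
used when the shorter of two sides at a vertex is extended to the length of the other. -/
lemma IsMinIsoscelesContainer.param_le {A B C S P R Z : Pt} {τ : ℝ} {u v w i j k : Fin 3}
    (h : IsMinIsoscelesContainer A B C S P R) (hABC : AffineIndependent ℝ ![A, B, C])
    (huv : u ≠ v) (huw : u ≠ w) (hvw : v ≠ w)
    (htri : tri S P R = tri (![A, B, C] u) (![A, B, C] v) Z) (hτ : 0 < τ)
    (hZ : coords Z = ((coords (![A, B, C] u)).1 + τ * ((coords (![A, B, C] w)).1 -
        (coords (![A, B, C] u)).1), (coords (![A, B, C] u)).2 +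
        τ * ((coords (![A, B, C] w)).2 - (coords (![A, B, C] u)).2)))
    (hij : i ≠ j) (hik : i ≠ k) (hjk : j ≠ k)
    (hle : dist (![A, B, C] k) (![A, B, C] j) ≤ dist (![A, B, C] i) (![A, B, C] j)) :
    τ * dist (![A, B, C] k) (![A, B, C] j) ≤ dist (![A, B, C] i) (![A, B, C] j) := by
  have hK : 0 < |crossArea (coords (![A, B, C] i)) (coords (![A, B, C] j))
      (coords (![A, B, C] k))| := by
    rw [abs_crossArea_perm (fun n => coords (![A, B, C] n)) hij hik hjk, abs_pos]
    exact (affineIndependent_iff_crossArea_ne _ _ _).1 hABC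
  have := (h.minDoubleArea htri).extend hij hik hjk
    (dist_pos.2 (hABC.injective.ne hjk.symm)) hle (abs_pos.1 hK)
    (dist_sq_eq_sqDist _ _).symm (dist_sq_eq_sqDist _ _).symm
  rw [crossArea_ray hZ, abs_mul, abs_of_pos hτ,
    abs_crossArea_perm (fun n => coords (![A, B, C] n)) huv huw hvw,
    ← abs_crossArea_perm (fun n => coords (![A, B, C] n)) hij hik hjk] at this
  refine le_of_mul_le_mul_right ?_ hK
  linarith

/-- If `CA = CZ` for the point `Z` dividing `A B` in the ratio `τ`, and `τ` is at most `CA / CB`,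
then the angle `A C Z` is obtuse. -/
lemma dotAt_neg_of_param_le {A B C Z : Pt} {τ : ℝ}
    (hZ : coords Z = ((coords A).1 + τ * ((coords B).1 - (coords A).1),
      (coords A).2 + τ * ((coords B).2 - (coords A).2)))
    (hτd : τ * dist B A ^ 2 = dist C A ^ 2 + dist B A ^ 2 - dist C B ^ 2)
    (ha : 0 < dist C B) (hab : dist C B < dist C A) (hle : τ * dist C B ≤ dist C A) :
    dotAt (coords C) (coords A) (coords Z) < 0 := by
  have hdot : 2 * dotAt (coords C) (coords A) (coords Z) =
      2 * dist C A ^ 2 - τ * (dist C A ^ 2 + dist B A ^ 2 - dist C B ^ 2) := by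
    rw [hZ]
    simp only [dist_sq_eq_sqDist, dotAt, sqDist]
    ring
  rw [← hτd] at hdot
  generalize dist C A = b at *
  generalize dist C B = a at *
  generalize hc : dist B A ^ 2 = c at *
  have hc0 : 0 ≤ c := hc ▸ sq_nonneg _
  have h1 : a * (a + b) ≤ c := by
    have : (τ * a) * c ≤ b * c := mul_le_mul_of_nonneg_right hle hc0
    have h2 : (b - a) * (a * (a + b) - c) ≤ 0 := by nlinarith
    by_contra! h3
    nlinarith [mul_pos (sub_pos.2 hab) (sub_pos.2 h3)]
  have hb : 0 < b := ha.trans hab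
  have hcpos : 0 < c := lt_of_lt_of_le (by positivity) h1
  have h2 : 2 * b ^ 2 * c < (τ * c) ^ 2 := by
    rw [hτd]
    nlinarith [mul_nonneg (sub_nonneg.2 h1) hcpos.le, mul_pos (sub_pos.2 hab) hb, mul_pos ha hb]
  by_contra! h3
  nlinarith [mul_nonneg h3 hcpos.le]

/-- a minimum area isosceles container `S P R` of an acute
triangle `A B C` with side lengths `a < b < c` is obtuse if and only if it
equals one of the special containers of the second kind
`AB₁C`, `ABC₁`, `ABC₂`. -/
theorem statement3 (A B C B₁ C₁ C₂ S P R : Pt)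
    (hABC : AffineIndependent ℝ ![A, B, C])
    (hab : dist B C < dist C A) (hbc : dist C A < dist A B)
    (hacute : ∠ B A C < π / 2 ∧ ∠ A B C < π / 2 ∧ ∠ A C B < π / 2)
    (hB₁ray : OnRay A B B₁) (hB₁ne : B₁ ≠ A) (hB₁dist : dist B₁ C = dist C A)
    (hC₁ray : OnRay A C C₁) (hC₁ne : C₁ ≠ A) (hC₁dist : dist B C₁ = dist A B)
    (hC₂ray : OnRay B C C₂) (hC₂ne : C₂ ≠ B) (hC₂dist : dist A C₂ = dist A B)
    (hmin : IsMinIsoscelesContainer A B C S P R) :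
    (π / 2 < ∠ P S R ∨ π / 2 < ∠ S P R ∨ π / 2 < ∠ S R P) ↔
      (tri S P R = tri A B₁ C ∨ tri S P R = tri A B C₁ ∨
        tri S P R = tri A B C₂) := by
  have hinj := hABC.injective
  have hBA : B ≠ A := hinj.ne (show (1 : Fin 3) ≠ 0 by decide)
  have hCA : C ≠ A := hinj.ne (show (2 : Fin 3) ≠ 0 by decide)
  have hCB : C ≠ B := hinj.ne (show (2 : Fin 3) ≠ 1 by decide)
  have ha : 0 < dist B C := dist_pos.2 hCB.symm
  constructor
  · have special {S P R : Pt} (h : IsMinIsoscelesContainer A B C S P R) (hobt : π / 2 < ∠ S P R) :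
        tri S P R = tri A B₁ C ∨ tri S P R = tri A B C₁ ∨ tri S P R = tri A B C₂ := by
      obtain ⟨i, j, k, hij, hik, hjk, Z, htri, hray, hne, hd, hle⟩ := h.exists_special hacute hobt
      fin_cases i <;> fin_cases j <;> simp at hij <;> fin_cases k <;> simp at hik hjk <;>
        simp at htri hray hne hd hle
      · obtain rfl := hray.unique hC₁ray hCA hne hC₁ne hd (by rw [dist_comm, hC₁dist])
        exact Or.inr (Or.inl htri)
      · obtain rfl := hray.unique hB₁ray hBA hne hB₁ne hd (by rw [hB₁dist, dist_comm])
        exact Or.inl (htri.trans (tri_perm A Z C).2)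
      · obtain rfl := hray.unique hC₂ray hCB hne hC₂ne hd
          (by rw [dist_comm, hC₂dist, dist_comm])
        exact Or.inr (Or.inr (htri.trans (tri_perm A B Z).1))
      · rw [dist_comm A C] at hle
        linarith
      · rw [dist_comm B A] at hle
        linarith
      · rw [dist_comm C B] at hle
        linarith
    rintro (hobt | hobt | hobt)
    · rw [← (tri_perm S P R).1]
      exact special hmin.swap₁₂ hobt
    · exact special hmin hobt
    · rw [← (tri_perm S P R).2]
      exact special hmin.swap₂₃ hobt
  · rintro (htri | htri | htri)
    · obtain ⟨τ, hτ, hZ, hτd⟩ := hB₁ray.exists_param hBA hB₁ne (hB₁dist.trans (dist_comm C A))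
      have hle := hmin.param_le (u := 0) (v := 2) (w := 1) (i := 0) (j := 2) (k := 1) hABC
        (by decide) (by decide) (by decide) (htri.trans (tri_perm A B₁ C).2.symm) hτ hZ
        (by decide) (by decide) (by decide) (by simpa [dist_comm] using hab.le)
      have hneg : dotAt (coords C) (coords A) (coords B₁) < 0 :=
        dotAt_neg_of_param_le hZ hτd (by rwa [dist_comm]) (by rwa [dist_comm])
          (by simpa [dist_comm] using hle)
      have hangle := (pi_div_two_lt_angle_iff _ _ _).2 hneg
      have h0 : crossArea (coords A) (coords B₁) (coords C) ≠ 0 := by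
        rw [crossArea_swap₂₃, crossArea_ray hZ, crossArea_swap₂₃]
        simpa [hτ.ne'] using (affineIndependent_iff_crossArea_ne _ _ _).1 hABC
      have hAC := hCA.symm
      have hB₁C : B₁ ≠ C := by
        rintro rfl
        exact h0 (by simp only [crossArea]; ring)
      have hA := vertex_mem_of_tri_eq h0 htri
      have hB := vertex_mem_of_tri_eq (A := B₁) (B := A) (C := C)
        (by rwa [crossArea_swap₁₂, neg_ne_zero]) (htri.trans (tri_perm A B₁ C).1.symm)
      have hC := vertex_mem_of_tri_eq (A := C) (B := A) (C := B₁)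
        (by rwa [crossArea_swap₁₂, crossArea_swap₂₃, neg_neg])
        (htri.trans ((tri_perm A B₁ C).2.symm.trans (tri_perm A C B₁).1.symm))
      rcases hA with rfl | rfl | rfl <;> rcases hB with rfl | rfl | rfl <;>
        rcases hC with rfl | rfl | rfl <;> simp_all [angle_comm]
    · obtain ⟨τ, hτ, hZ, hτd⟩ := hC₁ray.exists_param (V := B) hCA hC₁ne
        (by rw [dist_comm, hC₁dist])
      have hle := hmin.param_le (u := 0) (v := 1) (w := 2) (i := 1) (j := 0) (k := 2) hABC
        (by decide) (by decide) (by decide) htri hτ hZ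
        (by decide) (by decide) (by decide) (by simpa [dist_comm] using hbc.le)
      simp at hle
      rw [dist_comm B A] at hle hτd
      nlinarith
    · obtain ⟨τ, hτ, hZ, hτd⟩ := hC₂ray.exists_param (V := A) hCB hC₂ne
        (by rw [dist_comm, hC₂dist, dist_comm])
      have hle := hmin.param_le (u := 1) (v := 0) (w := 2) (i := 1) (j := 0) (k := 2) hABC
        (by decide) (by decide) (by decide) (htri.trans (tri_perm A B C₂).1.symm) hτ hZ
        (by decide) (by decide) (by decide) (by simpa [dist_comm] using hbc.le)
      simp at hle
      rw [dist_comm B A] at hle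
      rw [dist_comm C B, dist_comm A C] at hτd
      have h1 : dist B C ^ 2 * (τ * dist C A) ≤ dist B C ^ 2 * dist A B := by gcongr
      have h2 : 0 < (dist A B - dist C A) *
          (dist C A * (dist A B + dist C A) - dist B C ^ 2) :=
        mul_pos (sub_pos.2 hbc) (by nlinarith)
      exact absurd h2 (not_lt.2 (by linear_combination h1 - dist C A * hτd))
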